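/- (Discrete strong duality.) In the discrete variational mean field game setting, assume M̄⁰_i ≥ 0 for all i. Then min { Θ(M, W) : (M, W) ∈ ℳ × 𝒲, A M + B W = 0, M⁰ = M̄⁰ } = − min_{(U, φ) ∈ 𝒰 × (ZMod N_h → ℝ)} { Θ*(Σ*(U, φ)) − ∑_i M̄⁰_i φ_i }, where Θ*(ξ, ζ) = sup_{(M,W) ∈ ℳ × 𝒲} ( ⟨ξ, M⟩ + ⟨ζ, W⟩ − Θ(M, W) ) and Σ*(U, φ) = (A*U + E₀φ, B*U) with (E₀φ)^0_i = φ_i and (E₀φ)^n_i = 0 for n ≥ 1, (B*U)^n_i = −( (U^n_{i+1} − U^n_i)/h , (U^n_i − U^n_{i−1})/h ), and A* the adjoint of A. Moreover the minimum in the dual (right-hand side) problem is attained. -/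

import Mathlib

/-!
# Discrete strong duality for the variational mean field game

The cost `Θ` is `+∞` off the convex set `Dom` and equals there a real convex function `thetaR`
(`Theta_of_dom`, `Theta_of_not_dom`, `thetaR_convexOn`). Since `opAstar` and `opBstar` are adjoint to
`opA` and `opB` (`pairing_eq`), the pairing of `Σ*(U, φ)` with `(M, W)` is
`⟨U, A M + B W⟩ + ⟨φ, M⁰⟩`, so the dual objective is the Lagrangian dual of the primal problem and
weak duality is immediate (`weak_duality`). Equality, and optimality on both sides, follow once a
feasible `p ∈ Dom` and multipliers `(U, φ)` are found with
`⟨Σ*(U, φ), p'⟩ - Θ(p') ≤ ⟨φ, M̄⁰⟩ - Θ(p)` for all `p' ∈ Dom` (`exists_saddle`).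

* If the total mass of `M̄⁰` is positive, on the periodic grid it can be spread to the uniform density
  in one time step, and a circulation pushes all fluxes into the interior of `K`. This gives a
  feasible interior point of `Dom` (`exists_slater`), for any `ν`. A primal minimiser exists by
  compactness (`exists_primal`), because feasible densities have constant mass, and separating the
  strict epigraph of `thetaR` from the feasible set yields the multipliers (`slater_multiplier`).
* If the mass is zero there is no Slater point, but `(0, 0)` is optimal, and an explicit `U`, constant
  in space and affine in time, certifies it (`certificate_zero`).
-/

noncomputable section
open Classical

/-- Discrete Laplacian with periodic boundary conditions. -/
def lapl (Nh : ℕ) (h : ℝ) (W : ZMod Nh → ℝ) (i : ZMod Nh) : ℝ :=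
  (W (i + 1) - 2 * W i + W (i - 1)) / h ^ 2

/-- `(A M)^n_i = (M^{n+1}_i - M^n_i)/Δt - ν (Δ_h M^{n+1})_i`. -/
def opA (NT Nh : ℕ) (dt ν h : ℝ) (M : Fin (NT + 1) → ZMod Nh → ℝ)
    (n : Fin NT) (i : ZMod Nh) : ℝ :=
  (M n.succ i - M n.castSucc i) / dt - ν * lapl Nh h (M n.succ) i

/-- `(B W)^n_i = (W^n_{i+1,2} - W^n_{i,2})/h + (W^n_{i,1} - W^n_{i-1,1})/h`. -/
def opB (NT Nh : ℕ) (h : ℝ) (W : Fin NT → ZMod Nh → ℝ × ℝ)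
    (n : Fin NT) (i : ZMod Nh) : ℝ :=
  ((W n (i + 1)).2 - (W n i).2) / h + ((W n i).1 - (W n (i - 1)).1) / h

/-- `L̃(m,w) = |w|²/(2m)` if `m > 0` and `w ∈ K = (-∞,0] × [0,∞)`, `L̃(0,0) = 0`,
and `+∞` otherwise. -/
def Ltil (m : ℝ) (w : ℝ × ℝ) : EReal :=
  if 0 < m then
    (if w.1 ≤ 0 ∧ 0 ≤ w.2 then (((w.1 ^ 2 + w.2 ^ 2) / (2 * m) : ℝ) : EReal) else ⊤)
  else if m = 0 ∧ w = 0 then (0 : EReal) else ⊤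

/-- `F(m) = ∫₀^m f₀(s) ds` for `m ≥ 0`, `+∞` for `m < 0`. -/
def Fcost (f0 : ℝ → ℝ) (m : ℝ) : EReal :=
  if 0 ≤ m then ((∫ s in (0:ℝ)..m, f0 s : ℝ) : EReal) else ⊤

/-- The cost functional
`Θ(M,W) = ∑_{n=1}^{N_T} ∑_i [ L̃(M^n_i, W^{n-1}_i) + F(x_i, M^n_i) ]
          + (1/Δt) ∑_i Φ(x_i, M^{N_T}_i)`. -/
def Theta (NT Nh : ℕ) [NeZero Nh] (dt : ℝ) (f0 phi : ZMod Nh → ℝ → ℝ)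
    (M : Fin (NT + 1) → ZMod Nh → ℝ) (W : Fin NT → ZMod Nh → ℝ × ℝ) : EReal :=
  (∑ n : Fin NT, ∑ i : ZMod Nh,
      (Ltil (M n.succ i) (W n i) + Fcost (f0 i) (M n.succ i)))
    + ((1 / dt : ℝ) : EReal) * ∑ i : ZMod Nh, Fcost (phi i) (M (Fin.last NT) i)

/-- The adjoint `A* : 𝒰 → ℳ` of `A`. -/
def opAstar (NT Nh : ℕ) (dt ν h : ℝ) (U : Fin NT → ZMod Nh → ℝ)
    (n : Fin (NT + 1)) (i : ZMod Nh) : ℝ :=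
  if h0 : (n : ℕ) = 0 then
    if hpos : 0 < NT then -(U ⟨0, hpos⟩ i) / dt else 0
  else if hlt : (n : ℕ) < NT then
    (U ⟨(n : ℕ) - 1, by omega⟩ i - U ⟨(n : ℕ), hlt⟩ i) / dt
      - ν * lapl Nh h (U ⟨(n : ℕ) - 1, by omega⟩) i
  else
    if hpos : 0 < NT then
      U ⟨NT - 1, by omega⟩ i / dt - ν * lapl Nh h (U ⟨NT - 1, by omega⟩) i
    else 0

/-- `(B* U)^n_i = -((U^n_{i+1} - U^n_i)/h, (U^n_i - U^n_{i-1})/h)`. -/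
def opBstar (NT Nh : ℕ) (h : ℝ) (U : Fin NT → ZMod Nh → ℝ)
    (n : Fin NT) (i : ZMod Nh) : ℝ × ℝ :=
  (-((U n (i + 1) - U n i) / h), -((U n i - U n (i - 1)) / h))

/-- `(E₀ φ)⁰ = φ`, `(E₀ φ)ⁿ = 0` for `n ≥ 1`. -/
def E0 (NT Nh : ℕ) (φ : ZMod Nh → ℝ) (n : Fin (NT + 1)) (i : ZMod Nh) : ℝ :=
  if n = 0 then φ i else 0

/-- Inner product on `ℳ`. -/
def inerM (NT Nh : ℕ) [NeZero Nh] (X M : Fin (NT + 1) → ZMod Nh → ℝ) : ℝ :=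
  ∑ n : Fin (NT + 1), ∑ i : ZMod Nh, X n i * M n i

/-- Inner product on `𝒲`. -/
def inerW (NT Nh : ℕ) [NeZero Nh] (Z W : Fin NT → ZMod Nh → ℝ × ℝ) : ℝ :=
  ∑ n : Fin NT, ∑ i : ZMod Nh, ((Z n i).1 * (W n i).1 + (Z n i).2 * (W n i).2)

/-- Convex conjugate of `Θ` : `Θ*(ξ, ζ) = sup_{(M,W)} (⟨ξ,M⟩ + ⟨ζ,W⟩ - Θ(M,W))`. -/
def ThetaStar (NT Nh : ℕ) [NeZero Nh] (dt : ℝ) (f0 phi : ZMod Nh → ℝ → ℝ)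
    (ξ : Fin (NT + 1) → ZMod Nh → ℝ) (ζ : Fin NT → ZMod Nh → ℝ × ℝ) : EReal :=
  ⨆ p : (Fin (NT + 1) → ZMod Nh → ℝ) × (Fin NT → ZMod Nh → ℝ × ℝ),
    ((inerM NT Nh ξ p.1 + inerW NT Nh ζ p.2 : ℝ) : EReal)
      - Theta NT Nh dt f0 phi p.1 p.2

/-- Dual objective : `(U,φ) ↦ Θ*(Σ*(U,φ)) - ∑_i M̄⁰_i φ_i` with
`Σ*(U,φ) = (A*U + E₀φ, B*U)`. -/
def DualObj (NT Nh : ℕ) [NeZero Nh] (dt ν h : ℝ) (f0 phi : ZMod Nh → ℝ → ℝ)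
    (M0bar : ZMod Nh → ℝ) (U : Fin NT → ZMod Nh → ℝ) (φ : ZMod Nh → ℝ) : EReal :=
  ThetaStar NT Nh dt f0 phi
      (fun n i => opAstar NT Nh dt ν h U n i + E0 NT Nh φ n i)
      (opBstar NT Nh h U)
    - ((∑ i : ZMod Nh, M0bar i * φ i : ℝ) : EReal)

/-! ### Lagrange multipliers under Slater's condition -/

/-- Slater multiplier theorem: a convex function on a convex set `D`, minimised under finitely many
linear equality constraints that some interior point of `D` satisfies, has Lagrange multipliers.
The multipliers come from separating the open convex set `{(x, t) | x ∈ interior D, θ x < t}` from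
the affine set `{(x, v) | x feasible}`. -/
lemma slater_multiplier {E ι : Type*} [NormedAddCommGroup E] [NormedSpace ℝ E]
    [FiniteDimensional ℝ E] [Fintype ι] (ℓ : ι → E →ₗ[ℝ] ℝ) (b : ι → ℝ) (D : Set E) (θ : E → ℝ)
    (hθ : ConvexOn ℝ D θ) (q : E) (hq : q ∈ interior D) (hqf : ∀ j, ℓ j q = b j) (v : ℝ)
    (hv : ∀ p ∈ D, (∀ j, ℓ j p = b j) → v ≤ θ p) :
    ∃ c : ι → ℝ, ∀ p ∈ D, ∑ j, c j * ℓ j p - θ p ≤ ∑ j, c j * b j - v := by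
  set V : Set (E × ℝ) := {p | p.1 ∈ interior D ∧ θ p.1 < p.2} with hV
  have hVc : Convex ℝ V :=
    (hθ.subset interior_subset hθ.1.interior).convex_strict_epigraph
  have hVo : IsOpen V := by
    have hc : ContinuousOn (fun p : E × ℝ => p.2 - θ p.1) (interior D ×ˢ Set.univ) :=
      continuousOn_snd.sub (hθ.continuousOn_interior.comp continuousOn_fst fun p hp => hp.1)
    have := hc.isOpen_inter_preimage (isOpen_interior.prod isOpen_univ) (isOpen_Ioi (a := (0:ℝ)))
    convert this using 1
    ext p
    simp [hV]
  set A : Set (E × ℝ) := {p | (∀ j, ℓ j p.1 = b j) ∧ p.2 = v} with hA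
  have hAc : Convex ℝ A := by
    rintro x ⟨hx, hx'⟩ y ⟨hy, hy'⟩ s t _ _ hst
    refine ⟨fun j => ?_, ?_⟩
    · simp only [Prod.fst_add, Prod.smul_fst, map_add, map_smul, hx j, hy j, smul_eq_mul]
      rw [← add_mul, hst, one_mul]
    · simp only [Prod.snd_add, Prod.smul_snd, hx', hy', smul_eq_mul]
      rw [← add_mul, hst, one_mul]
  have hdis : Disjoint V A := by
    rw [Set.disjoint_left]
    rintro x ⟨hx1, hx2⟩ ⟨hx3, hx4⟩
    have := hv x.1 (interior_subset hx1) hx3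
    linarith
  obtain ⟨f, u, hfV, hfA⟩ := geometric_hahn_banach_open hVc hVo hAc hdis
  set L : E →ₗ[ℝ] ℝ := (f : E × ℝ →ₗ[ℝ] ℝ) ∘ₗ LinearMap.inl ℝ E ℝ with hL
  set μ : ℝ := f (0, 1) with hμ
  have hf : ∀ x t, f (x, t) = L x + t * μ := by
    intro x t
    have : (x, t) = (x, (0:ℝ)) + t • ((0:E), (1:ℝ)) := by simp
    rw [this, map_add, map_smul]; simp [hL, hμ]
  have hqA : u ≤ L q + v * μ := by rw [← hf]; exact hfA _ ⟨hqf, rfl⟩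
  -- At the Slater point the two sets lie over each other, so the separating plane is not vertical.
  have hμneg : μ < 0 := by
    have h1 : f (q, max (θ q) v + 1) < u :=
      hfV _ ⟨hq, by have := le_max_left (θ q) v; simp only; linarith⟩
    rw [hf] at h1
    have h2 := le_max_right (θ q) v
    by_contra h
    push Not at h
    nlinarith
  have hμ0 : μ ≠ 0 := hμneg.ne
  -- `L` is bounded below on the affine set, hence vanishes on its direction space.
  have hker : ⨅ j, (ℓ j).ker ≤ L.ker := by
    intro k hk
    simp only [Submodule.mem_iInf, LinearMap.mem_ker] at hk ⊢
    by_contra hne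
    have h1 : ∀ s : ℝ, u ≤ L q + s * L k + v * μ := by
      intro s
      have := hfA (q + s • k, v) ⟨fun j => by simp [hqf j, hk j], rfl⟩
      rw [hf] at this
      simpa using this
    have h2 := h1 ((u - L q - v * μ - 1) / L k)
    rw [div_mul_cancel₀ _ hne] at h2
    linarith
  obtain ⟨c, hc⟩ := (Submodule.mem_span_range_iff_exists_fun ℝ).1 (mem_span_of_iInf_ker_le_ker hker)
  have hcL : ∀ x, ∑ j, c j * ℓ j x = L x := by
    intro x; rw [← hc]; simp
  have hint : ∀ p ∈ interior D, L p + θ p * μ ≤ L q + v * μ := by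
    intro p hp
    refine le_of_forall_pos_le_add fun ε hε => ?_
    have h1 := hfV (p, θ p + ε / (-μ)) ⟨hp, by
      have : 0 < ε / (-μ) := div_pos hε (by linarith)
      simp only; linarith⟩
    rw [hf] at h1
    have : ε / (-μ) * μ = -ε := by field_simp
    nlinarith
  have hall : ∀ p ∈ D, L p + θ p * μ ≤ L q + v * μ := by
    intro p hp
    have hs : ∀ s ∈ Set.Ioo (0:ℝ) 1,
        s * (L q + θ q * μ) + (1 - s) * (L p + θ p * μ) ≤ L q + v * μ := by
      intro s hs
      have h1 := hint _ (hθ.1.combo_interior_self_mem_interior hq hp hs.1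
        (by linarith [hs.2] : (0:ℝ) ≤ 1 - s) (by ring))
      have h2 := hθ.2 (interior_subset hq) hp hs.1.le (by linarith [hs.2] : (0:ℝ) ≤ 1 - s) (by ring)
      simp only [map_add, map_smul, smul_eq_mul] at h1 h2
      nlinarith
    have hlim : Filter.Tendsto (fun s : ℝ => s * (L q + θ q * μ) + (1 - s) * (L p + θ p * μ))
        (nhdsWithin 0 (Set.Ioi 0)) (nhds (L p + θ p * μ)) := by
      have : Continuous (fun s : ℝ => s * (L q + θ q * μ) + (1 - s) * (L p + θ p * μ)) := by
        fun_prop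
      have := this.tendsto 0
      simp only [zero_mul, sub_zero, one_mul, zero_add] at this
      exact this.mono_left nhdsWithin_le_nhds
    refine le_of_tendsto hlim ?_
    filter_upwards [Ioo_mem_nhdsGT (zero_lt_one (α := ℝ))] with s hs' using hs s hs'
  refine ⟨fun j => c j / (-μ), fun p hp => ?_⟩
  have e1 : ∀ x : ι → ℝ, ∑ j, c j / (-μ) * x j = (∑ j, c j * x j) / (-μ) := by
    intro x; rw [Finset.sum_div]; exact Finset.sum_congr rfl fun j _ => by ring
  have e2 : ∑ j, c j * b j = L q := by
    rw [← hcL]; exact Finset.sum_congr rfl fun j _ => by rw [hqf]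
  rw [e1, e1, hcL, e2]
  have hμ' : 0 < -μ := by linarith
  have h3 := hall p hp
  have : L p / -μ - θ p - (L q / -μ - v) = (L p + θ p * μ - (L q + v * μ)) / (-μ) := by
    field_simp
    ring
  have h4 : (L p + θ p * μ - (L q + v * μ)) / (-μ) ≤ 0 :=
    div_nonpos_of_nonpos_of_nonneg (by linarith) hμ'.le
  linarith

/-! ### The cost as a real function on its effective domain -/

lemma EReal_coe_sum {ι : Type*} (s : Finset ι) (f : ι → ℝ) :
    ∑ i ∈ s, (f i : EReal) = ((∑ i ∈ s, f i : ℝ) : EReal) := by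
  induction s using Finset.cons_induction with
  | empty => simp
  | cons a s ha ih => rw [Finset.sum_cons, Finset.sum_cons, ih, EReal.coe_add]

lemma EReal_sum_ne_bot {ι : Type*} (s : Finset ι) (f : ι → EReal) (hf : ∀ i ∈ s, f i ≠ ⊥) :
    ∑ i ∈ s, f i ≠ ⊥ := by
  induction s using Finset.cons_induction with
  | empty => simp
  | cons a s ha ih =>
    rw [Finset.sum_cons, Ne, EReal.add_eq_bot_iff, not_or]
    exact ⟨hf a (by simp), ih fun i hi => hf i (by simp [hi])⟩

lemma EReal_sum_eq_top {ι : Type*} (s : Finset ι) (f : ι → EReal) (hf : ∀ i ∈ s, f i ≠ ⊥)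
    (a : ι) (ha : a ∈ s) (hfa : f a = ⊤) : ∑ i ∈ s, f i = ⊤ := by
  rw [← Finset.add_sum_erase s f ha, hfa]
  exact EReal.top_add_of_ne_bot (EReal_sum_ne_bot _ _ fun i hi => hf i (Finset.mem_of_mem_erase hi))

/-- The kinetic cost `|w|²/(2m)`. Since division by zero gives `0`, it takes the right value `0` at
`(0, 0)`. -/
def kin (m : ℝ) (w : ℝ × ℝ) : ℝ := (w.1 ^ 2 + w.2 ^ 2) / (2 * m)

/-- The effective domain of `L̃`. -/
def domPt (m : ℝ) (w : ℝ × ℝ) : Prop := (0 < m ∧ w.1 ≤ 0 ∧ 0 ≤ w.2) ∨ (m = 0 ∧ w = 0)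

/-- The space `ℳ × 𝒲`. -/
abbrev PSpace (NT Nh : ℕ) : Type :=
  (Fin (NT + 1) → ZMod Nh → ℝ) × (Fin NT → ZMod Nh → ℝ × ℝ)

/-- The effective domain of `Θ`. -/
def Dom (NT Nh : ℕ) : Set (PSpace NT Nh) :=
  {p | ∀ (n : Fin NT) (i : ZMod Nh), domPt (p.1 n.succ i) (p.2 n i)}

/-- The part of the cost that depends on `M` only, with `F`, `P` the real-valued running and
terminal costs. -/
def gcost (NT Nh : ℕ) [NeZero Nh] (dt : ℝ) (F P : ZMod Nh → ℝ → ℝ)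
    (M : Fin (NT + 1) → ZMod Nh → ℝ) : ℝ :=
  (∑ n : Fin NT, ∑ i : ZMod Nh, F i (M n.succ i)) + 1 / dt * ∑ i : ZMod Nh, P i (M (Fin.last NT) i)

/-- The real-valued cost, which agrees with `Θ` on `Dom`. -/
def thetaR (NT Nh : ℕ) [NeZero Nh] (dt : ℝ) (F P : ZMod Nh → ℝ → ℝ) (p : PSpace NT Nh) : ℝ :=
  (∑ n : Fin NT, ∑ i : ZMod Nh, kin (p.1 n.succ i) (p.2 n i)) + gcost NT Nh dt F P p.1

/-- The primitive `m ↦ ∫₀^m f(x_i, s) ds`, without the constraint `m ≥ 0`. -/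
def prim {ι : Type*} (f : ι → ℝ → ℝ) (i : ι) (m : ℝ) : ℝ := ∫ s in (0:ℝ)..m, f i s

lemma domPt.nonneg {m : ℝ} {w : ℝ × ℝ} (h : domPt m w) : 0 ≤ m := by
  rcases h with ⟨h, _⟩ | ⟨h, _⟩
  · exact h.le
  · exact h.ge

lemma Ltil_of_dom {m : ℝ} {w : ℝ × ℝ} (h : domPt m w) : Ltil m w = (kin m w : EReal) := by
  unfold Ltil kin
  rcases h with ⟨h1, h2⟩ | ⟨h1, h2⟩
  · rw [if_pos h1, if_pos h2]
  · simp [h1, h2]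

lemma Ltil_of_not_dom {m : ℝ} {w : ℝ × ℝ} (h : ¬ domPt m w) : Ltil m w = ⊤ := by
  unfold domPt at h
  unfold Ltil
  split_ifs <;> simp_all

lemma Ltil_ne_bot (m : ℝ) (w : ℝ × ℝ) : Ltil m w ≠ ⊥ := by
  unfold Ltil
  split_ifs <;> first | exact EReal.coe_ne_bot _ | simp

lemma Fcost_of_nonneg {ι : Type*} (f : ι → ℝ → ℝ) (i : ι) {m : ℝ} (h : 0 ≤ m) :
    Fcost (f i) m = (prim f i m : EReal) := by
  rw [Fcost, if_pos h]; rfl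

lemma Fcost_ne_bot (f : ℝ → ℝ) (m : ℝ) : Fcost f m ≠ ⊥ := by
  unfold Fcost
  split_ifs <;> first | exact EReal.coe_ne_bot _ | simp

lemma nonneg_last {NT Nh : ℕ} (hNT : 0 < NT) {p : PSpace NT Nh} (hp : p ∈ Dom NT Nh)
    (i : ZMod Nh) : 0 ≤ p.1 (Fin.last NT) i := by
  obtain ⟨N, rfl⟩ : ∃ N, NT = N + 1 := ⟨NT - 1, by omega⟩
  exact (hp (Fin.last N) i).nonneg

lemma Theta_of_dom {NT Nh : ℕ} (hNT : 0 < NT) [NeZero Nh] (dt : ℝ) (f0 phi : ZMod Nh → ℝ → ℝ)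
    (p : PSpace NT Nh) (hp : p ∈ Dom NT Nh) :
    Theta NT Nh dt f0 phi p.1 p.2 = (thetaR NT Nh dt (prim f0) (prim phi) p : EReal) := by
  unfold Theta thetaR gcost
  have h1 : ∀ (n : Fin NT) (i : ZMod Nh), Ltil (p.1 n.succ i) (p.2 n i) + Fcost (f0 i) (p.1 n.succ i)
      = ((kin (p.1 n.succ i) (p.2 n i) + prim f0 i (p.1 n.succ i) : ℝ) : EReal) := by
    intro n i
    rw [Ltil_of_dom (hp n i), Fcost_of_nonneg _ _ (hp n i).nonneg, EReal.coe_add]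
  have h2 : ∀ i : ZMod Nh, Fcost (phi i) (p.1 (Fin.last NT) i)
      = (prim phi i (p.1 (Fin.last NT) i) : EReal) :=
    fun i => Fcost_of_nonneg _ _ (nonneg_last hNT hp i)
  simp only [h1, h2, EReal_coe_sum, ← EReal.coe_add, ← EReal.coe_mul, Finset.sum_add_distrib]
  rw [add_assoc]

lemma Theta_of_not_dom {NT Nh : ℕ} [NeZero Nh] (dt : ℝ) (hdt : 0 < dt)
    (f0 phi : ZMod Nh → ℝ → ℝ) (p : PSpace NT Nh) (hp : p ∉ Dom NT Nh) :
    Theta NT Nh dt f0 phi p.1 p.2 = ⊤ := by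
  simp only [Dom, Set.mem_ofPred_eq, not_forall] at hp
  obtain ⟨n, i, hni⟩ := hp
  have hb : ∀ (n : Fin NT) (i : ZMod Nh),
      Ltil (p.1 n.succ i) (p.2 n i) + Fcost (f0 i) (p.1 n.succ i) ≠ ⊥ := by
    intro n i
    rw [Ne, EReal.add_eq_bot_iff, not_or]
    exact ⟨Ltil_ne_bot _ _, Fcost_ne_bot _ _⟩
  unfold Theta
  have h1 : ∑ n : Fin NT, ∑ i : ZMod Nh,
      (Ltil (p.1 n.succ i) (p.2 n i) + Fcost (f0 i) (p.1 n.succ i)) = ⊤ := by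
    refine EReal_sum_eq_top _ _ (fun n _ => EReal_sum_ne_bot _ _ fun i _ => hb n i) n
      (Finset.mem_univ _) (EReal_sum_eq_top _ _ (fun i _ => hb n i) i (Finset.mem_univ _) ?_)
    rw [Ltil_of_not_dom hni]
    exact EReal.top_add_of_ne_bot (Fcost_ne_bot _ _)
  rw [h1]
  refine EReal.top_add_of_ne_bot ?_
  have h2 : ∑ i : ZMod Nh, Fcost (phi i) (p.1 (Fin.last NT) i) ≠ ⊥ :=
    EReal_sum_ne_bot _ _ fun i _ => Fcost_ne_bot _ _
  have hpos : 0 < 1 / dt := by positivity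
  generalize ∑ i : ZMod Nh, Fcost (phi i) (p.1 (Fin.last NT) i) = S at h2 ⊢
  induction S with
  | bot => exact absurd rfl h2
  | coe x => rw [← EReal.coe_mul]; exact EReal.coe_ne_bot _
  | top => rw [EReal.coe_mul_top_of_pos hpos]; simp

lemma prim_hasDerivAt {ι : Type*} {f : ι → ℝ → ℝ} (hf : ∀ i, Continuous (f i)) (i : ι) (m : ℝ) :
    HasDerivAt (prim f i) (f i m) m :=
  intervalIntegral.integral_hasDerivAt_right ((hf i).intervalIntegrable _ _)
    ((hf i).stronglyMeasurableAtFilter _ _) (hf i).continuousAt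

lemma prim_continuous {ι : Type*} {f : ι → ℝ → ℝ} (hf : ∀ i, Continuous (f i)) (i : ι) :
    Continuous (prim f i) :=
  continuous_iff_continuousAt.2 fun m => (prim_hasDerivAt hf i m).continuousAt

lemma prim_convexOn {ι : Type*} {f : ι → ℝ → ℝ} (hf : ∀ i, Continuous (f i))
    (hm : ∀ i, Monotone (f i)) (i : ι) : ConvexOn ℝ Set.univ (prim f i) := by
  refine Monotone.convexOn_univ_of_deriv (fun m => (prim_hasDerivAt hf i m).differentiableAt) ?_
  have : deriv (prim f i) = f i := funext fun m => (prim_hasDerivAt hf i m).deriv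
  rw [this]; exact hm i

lemma prim_lower {ι : Type*} {f : ι → ℝ → ℝ} (hf : ∀ i, Continuous (f i))
    (hm : ∀ i, Monotone (f i)) (i : ι) {m : ℝ} (h : 0 ≤ m) : -|f i 0| * m ≤ prim f i m := by
  have h1 : ∫ s in (0:ℝ)..m, f i 0 ≤ ∫ s in (0:ℝ)..m, f i s :=
    intervalIntegral.integral_mono_on h (by simp) ((hf i).intervalIntegrable _ _)
      fun x hx => hm i hx.1
  rw [intervalIntegral.integral_const] at h1
  have h2 := neg_abs_le (f i 0)
  simp only [sub_zero, smul_eq_mul] at h1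
  unfold prim
  nlinarith

lemma kin_nonneg {m : ℝ} (hm : 0 ≤ m) (w : ℝ × ℝ) : 0 ≤ kin m w := by
  unfold kin; positivity

/-- Joint convexity of `(m, w) ↦ |w|²/(2m)` on the domain of `L̃`. -/
lemma kin_convex {m m' : ℝ} {w w' : ℝ × ℝ} (h : domPt m w) (h' : domPt m' w') {a b : ℝ}
    (ha : 0 ≤ a) (hb : 0 ≤ b) :
    kin (a * m + b * m') (a • w + b • w') ≤ a * kin m w + b * kin m' w' := by
  rcases ha.eq_or_lt with rfl | ha
  · rcases hb.eq_or_lt with rfl | hb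
    · simp [kin]
    · simp only [kin, zero_mul, zero_add, zero_smul, Prod.smul_fst, Prod.smul_snd, smul_eq_mul]
      apply le_of_eq; field_simp
  rcases hb.eq_or_lt with rfl | hb
  · simp only [kin, zero_mul, add_zero, zero_smul, Prod.smul_fst, Prod.smul_snd, smul_eq_mul]
    apply le_of_eq; field_simp
  rcases h with ⟨h1, h2⟩ | ⟨rfl, rfl⟩
  · rcases h' with ⟨h1', h2'⟩ | ⟨rfl, rfl⟩
    · obtain ⟨x, y⟩ := w
      obtain ⟨x', y'⟩ := w'
      simp only [kin, Prod.fst_add, Prod.smul_fst, Prod.snd_add, Prod.smul_snd, smul_eq_mul]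
      rw [← sub_nonneg]
      have : a * ((x ^ 2 + y ^ 2) / (2 * m)) + b * ((x' ^ 2 + y' ^ 2) / (2 * m')) -
          ((a * x + b * x') ^ 2 + (a * y + b * y') ^ 2) / (2 * (a * m + b * m')) =
          a * b * ((m' * x - m * x') ^ 2 + (m' * y - m * y') ^ 2)
            / (2 * m * m' * (a * m + b * m')) := by
        have : a * m + b * m' ≠ 0 := by positivity
        field_simp
        ring
      rw [this]
      positivity
    · simp only [kin, mul_zero, add_zero, smul_zero, Prod.smul_fst, Prod.smul_snd, smul_eq_mul]
      apply le_of_eq; simp; field_simp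
  · simp only [kin, mul_zero, zero_add, smul_zero, Prod.smul_fst, Prod.smul_snd, smul_eq_mul]
    apply le_of_eq; simp; field_simp

lemma domPt_convex {m m' : ℝ} {w w' : ℝ × ℝ} (h : domPt m w) (h' : domPt m' w') {a b : ℝ}
    (ha : 0 ≤ a) (hb : 0 ≤ b) (hab : a + b = 1) :
    domPt (a * m + b * m') (a • w + b • w') := by
  rcases ha.eq_or_lt with rfl | ha
  · obtain rfl : b = 1 := by linarith
    simpa using h'
  rcases hb.eq_or_lt with rfl | hb
  · obtain rfl : a = 1 := by linarith
    simpa using h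
  rcases h with ⟨h1, h2, h3⟩ | ⟨rfl, rfl⟩
  · left
    rcases h' with ⟨h1', h2', h3'⟩ | ⟨rfl, rfl⟩
    · refine ⟨by positivity, ?_, ?_⟩
      · simp only [Prod.fst_add, Prod.smul_fst, smul_eq_mul]
        nlinarith
      · simp only [Prod.snd_add, Prod.smul_snd, smul_eq_mul]
        positivity
    · refine ⟨by simp; positivity, ?_, ?_⟩
      · simp; nlinarith
      · simp; positivity
  · rcases h' with ⟨h1', h2', h3'⟩ | ⟨rfl, rfl⟩
    · left
      refine ⟨by simp; positivity, ?_, ?_⟩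
      · simp; nlinarith
      · simp; positivity
    · right; simp

lemma thetaR_convexOn {NT Nh : ℕ} [NeZero Nh] {dt : ℝ} (hdt : 0 < dt) {F P : ZMod Nh → ℝ → ℝ}
    (hF : ∀ i, ConvexOn ℝ Set.univ (F i)) (hP : ∀ i, ConvexOn ℝ Set.univ (P i)) :
    ConvexOn ℝ (Dom NT Nh) (thetaR NT Nh dt F P) := by
  constructor
  · intro x hx y hy a b ha hb hab n i
    exact domPt_convex (hx n i) (hy n i) ha hb hab
  · intro x hx y hy a b ha hb hab
    simp only [thetaR, gcost, smul_eq_mul]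
    have h1 : ∑ n : Fin NT, ∑ i, kin ((a • x + b • y).1 n.succ i) ((a • x + b • y).2 n i) ≤
        a * ∑ n : Fin NT, ∑ i, kin (x.1 n.succ i) (x.2 n i)
          + b * ∑ n : Fin NT, ∑ i, kin (y.1 n.succ i) (y.2 n i) := by
      simp only [Finset.mul_sum, ← Finset.sum_add_distrib]
      exact Finset.sum_le_sum fun n _ => Finset.sum_le_sum fun i _ =>
        kin_convex (hx n i) (hy n i) ha hb
    have h2 : ∑ n : Fin NT, ∑ i, F i ((a • x + b • y).1 n.succ i) ≤
        a * ∑ n : Fin NT, ∑ i, F i (x.1 n.succ i) + b * ∑ n : Fin NT, ∑ i, F i (y.1 n.succ i) := by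
      simp only [Finset.mul_sum, ← Finset.sum_add_distrib]
      exact Finset.sum_le_sum fun n _ => Finset.sum_le_sum fun i _ =>
        (hF i).2 (Set.mem_univ _) (Set.mem_univ _) ha hb hab
    have h3 : ∑ i, P i ((a • x + b • y).1 (Fin.last NT) i) ≤
        a * ∑ i, P i (x.1 (Fin.last NT) i) + b * ∑ i, P i (y.1 (Fin.last NT) i) := by
      simp only [Finset.mul_sum, ← Finset.sum_add_distrib]
      exact Finset.sum_le_sum fun i _ => (hP i).2 (Set.mem_univ _) (Set.mem_univ _) ha hb hab
    have h4 := mul_le_mul_of_nonneg_left h3 (show 0 ≤ 1 / dt by positivity)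
    nlinarith

/-! ### The linear constraints: mass conservation and adjointness -/

/-- The constraints `(A M + B W)^n_i = 0` and `M⁰_i = M̄⁰_i`, as linear functionals on `ℳ × 𝒲`. -/
def cons (NT Nh : ℕ) (dt ν h : ℝ) : (Fin NT × ZMod Nh) ⊕ ZMod Nh → (PSpace NT Nh →ₗ[ℝ] ℝ)
  | Sum.inl (n, i) =>
    { toFun := fun p => opA NT Nh dt ν h p.1 n i + opB NT Nh h p.2 n i
      map_add' := fun p q => by
        simp only [opA, opB, lapl, Prod.fst_add, Prod.snd_add, Pi.add_apply]
        ring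
      map_smul' := fun a p => by
        simp only [opA, opB, lapl, Prod.smul_fst, Prod.smul_snd, Pi.smul_apply, smul_eq_mul,
          RingHom.id_apply]
        ring }
  | Sum.inr i =>
    { toFun := fun p => p.1 0 i
      map_add' := fun p q => rfl
      map_smul' := fun a p => rfl }

/-- The right-hand sides of the constraints `cons`. -/
def rhs (NT Nh : ℕ) (M0bar : ZMod Nh → ℝ) : (Fin NT × ZMod Nh) ⊕ ZMod Nh → ℝ :=
  Sum.elim (fun _ => 0) M0bar

/-- Primal feasibility. -/
def Feas (NT Nh : ℕ) (dt ν h : ℝ) (M0bar : ZMod Nh → ℝ) (p : PSpace NT Nh) : Prop :=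
  ∀ j, cons NT Nh dt ν h j p = rhs NT Nh M0bar j

lemma feas_iff {NT Nh : ℕ} {dt ν h : ℝ} {M0bar : ZMod Nh → ℝ} {p : PSpace NT Nh} :
    Feas NT Nh dt ν h M0bar p ↔
      (∀ n i, opA NT Nh dt ν h p.1 n i + opB NT Nh h p.2 n i = 0) ∧ ∀ i, p.1 0 i = M0bar i := by
  constructor
  · intro H
    exact ⟨fun n i => H (Sum.inl (n, i)), fun i => H (Sum.inr i)⟩
  · rintro ⟨h1, h2⟩ (⟨n, i⟩ | i)
    · exact h1 n i
    · exact h2 i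

lemma sum_shift_add {Nh : ℕ} [NeZero Nh] (f : ZMod Nh → ℝ) : ∑ i, f (i + 1) = ∑ i, f i :=
  Equiv.sum_comp (Equiv.addRight (1 : ZMod Nh)) f

lemma sum_shift_sub {Nh : ℕ} [NeZero Nh] (f : ZMod Nh → ℝ) : ∑ i, f (i - 1) = ∑ i, f i :=
  Equiv.sum_comp (Equiv.subRight (1 : ZMod Nh)) f

lemma sum_lapl {Nh : ℕ} [NeZero Nh] (h : ℝ) (V : ZMod Nh → ℝ) : ∑ i, lapl Nh h V i = 0 := by
  simp only [lapl, ← Finset.sum_div, Finset.sum_add_distrib, Finset.sum_sub_distrib,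
    ← Finset.mul_sum, sum_shift_add V, sum_shift_sub V]
  rw [show ∑ i, V i - 2 * ∑ i, V i + ∑ i, V i = 0 by ring, zero_div]

lemma sum_opB {NT Nh : ℕ} [NeZero Nh] (h : ℝ) (W : Fin NT → ZMod Nh → ℝ × ℝ) (n : Fin NT) :
    ∑ i, opB NT Nh h W n i = 0 := by
  simp only [opB, ← Finset.sum_div, Finset.sum_add_distrib, Finset.sum_sub_distrib,
    sum_shift_add (fun i => (W n i).2), sum_shift_sub (fun i => (W n i).1)]
  simp

/-- Feasible densities have constant total mass. -/
lemma mass_conserved {NT Nh : ℕ} [NeZero Nh] {dt ν h : ℝ} (hdt : 0 < dt) {M0bar : ZMod Nh → ℝ}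
    {p : PSpace NT Nh} (hp : Feas NT Nh dt ν h M0bar p) (n : Fin (NT + 1)) :
    ∑ i, p.1 n i = ∑ i, M0bar i := by
  obtain ⟨h1, h2⟩ := feas_iff.1 hp
  induction n using Fin.induction with
  | zero => exact Finset.sum_congr rfl fun i _ => h2 i
  | succ n ih =>
    have h3 : ∑ i, (opA NT Nh dt ν h p.1 n i + opB NT Nh h p.2 n i) = 0 :=
      Finset.sum_eq_zero fun i _ => h1 n i
    rw [Finset.sum_add_distrib, sum_opB, add_zero] at h3
    simp only [opA, Finset.sum_sub_distrib, ← Finset.sum_div, ← Finset.mul_sum, sum_lapl, mul_zero,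
      sub_zero] at h3
    rw [div_eq_zero_iff] at h3
    rcases h3 with h3 | h3
    · linarith
    · exact absurd h3 hdt.ne'

lemma lapl_symm {Nh : ℕ} [NeZero Nh] (h : ℝ) (V Z : ZMod Nh → ℝ) :
    ∑ i, lapl Nh h V i * Z i = ∑ i, V i * lapl Nh h Z i := by
  have e1 := sum_shift_add (fun i => V i * Z (i - 1))
  have e2 := sum_shift_sub (fun i => V i * Z (i + 1))
  simp only [add_sub_cancel_right, sub_add_cancel] at e1 e2
  have h1 : ∀ i, lapl Nh h V i * Z i =
      (V (i + 1) * Z i) / h ^ 2 - 2 * (V i * Z i) / h ^ 2 + (V (i - 1) * Z i) / h ^ 2 := by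
    intro i; unfold lapl; ring
  have h2 : ∀ i, V i * lapl Nh h Z i =
      (V i * Z (i + 1)) / h ^ 2 - 2 * (V i * Z i) / h ^ 2 + (V i * Z (i - 1)) / h ^ 2 := by
    intro i; unfold lapl; ring
  simp only [h1, h2, Finset.sum_add_distrib, Finset.sum_sub_distrib, ← Finset.sum_div, e1, e2]
  ring

lemma opB_adjoint {NT Nh : ℕ} [NeZero Nh] (h : ℝ) (U : Fin NT → ZMod Nh → ℝ)
    (W : Fin NT → ZMod Nh → ℝ × ℝ) :
    inerW NT Nh (opBstar NT Nh h U) W = ∑ n, ∑ i, U n i * opB NT Nh h W n i := by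
  refine Finset.sum_congr rfl fun n _ => ?_
  have e1 := sum_shift_add (fun i => U n i * (W n (i - 1)).1)
  have e2 := sum_shift_sub (fun i => U n i * (W n (i + 1)).2)
  simp only [add_sub_cancel_right, sub_add_cancel] at e1 e2
  have h1 : ∀ i, (opBstar NT Nh h U n i).1 * (W n i).1 + (opBstar NT Nh h U n i).2 * (W n i).2 =
      (U n i * (W n i).1) / h - (U n (i + 1) * (W n i).1) / h
        + ((U n (i - 1) * (W n i).2) / h - (U n i * (W n i).2) / h) := by
    intro i; unfold opBstar; simp only; ring
  have h2 : ∀ i, U n i * opB NT Nh h W n i =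
      (U n i * (W n (i + 1)).2) / h - (U n i * (W n i).2) / h
        + ((U n i * (W n i).1) / h - (U n i * (W n (i - 1)).1) / h) := by
    intro i; unfold opB; ring
  simp only [h1, h2, Finset.sum_add_distrib, Finset.sum_sub_distrib, ← Finset.sum_div, e1, e2]
  ring

lemma opAstar_zero {N Nh : ℕ} (dt ν h : ℝ) (U : Fin (N + 1) → ZMod Nh → ℝ) (i : ZMod Nh) :
    opAstar (N + 1) Nh dt ν h U 0 i = -(U 0 i) / dt := by
  simp [opAstar]

lemma opAstar_castSucc_succ {N Nh : ℕ} (dt ν h : ℝ) (U : Fin (N + 1) → ZMod Nh → ℝ) (n : Fin N)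
    (i : ZMod Nh) :
    opAstar (N + 1) Nh dt ν h U n.castSucc.succ i =
      (U n.castSucc i - U n.succ i) / dt - ν * lapl Nh h (U n.castSucc) i := by
  have h1 : (⟨((n.castSucc.succ : Fin (N + 2)) : ℕ) - 1, by simp⟩ : Fin (N + 1)) =
      n.castSucc := by
    ext; simp
  have h2 : ((n.castSucc.succ : Fin (N + 2)) : ℕ) < N + 1 := by simp
  unfold opAstar
  rw [dif_neg (by simp), dif_pos h2, h1]
  rfl

lemma opAstar_last {N Nh : ℕ} (dt ν h : ℝ) (U : Fin (N + 1) → ZMod Nh → ℝ) (i : ZMod Nh) :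
    opAstar (N + 1) Nh dt ν h U (Fin.last N).succ i =
      U (Fin.last N) i / dt - ν * lapl Nh h (U (Fin.last N)) i := by
  unfold opAstar
  rw [dif_neg (by simp), dif_neg (by simp), dif_pos (by omega)]
  rfl

/-- Summation by parts in time: the operator `opAstar` is the adjoint of `opA`. -/
lemma opA_adjoint {NT Nh : ℕ} (hNT : 0 < NT) [NeZero Nh] (dt ν h : ℝ) (U : Fin NT → ZMod Nh → ℝ)
    (M : Fin (NT + 1) → ZMod Nh → ℝ) :
    inerM NT Nh (opAstar NT Nh dt ν h U) M = ∑ n, ∑ i, U n i * opA NT Nh dt ν h M n i := by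
  obtain ⟨N, rfl⟩ : ∃ N, NT = N + 1 := ⟨NT - 1, by omega⟩
  unfold inerM
  have hR : ∀ n : Fin (N + 1), ∑ i, U n i * opA (N + 1) Nh dt ν h M n i =
      (∑ i, U n i * M n.succ i) / dt - (∑ i, U n i * M n.castSucc i) / dt
        - ν * ∑ i, lapl Nh h (U n) i * M n.succ i := by
    intro n
    rw [lapl_symm]
    simp only [Finset.sum_div, Finset.mul_sum, ← Finset.sum_sub_distrib]
    refine Finset.sum_congr rfl fun i _ => ?_
    unfold opA; ring
  have hL0 : ∑ i, opAstar (N + 1) Nh dt ν h U 0 i * M 0 i = - (∑ i, U 0 i * M 0 i) / dt := by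
    simp only [opAstar_zero, Finset.sum_div, ← Finset.sum_neg_distrib]
    refine Finset.sum_congr rfl fun i _ => ?_
    ring
  have hLs : ∀ n : Fin N, ∑ i, opAstar (N + 1) Nh dt ν h U n.castSucc.succ i * M n.castSucc.succ i =
      (∑ i, U n.castSucc i * M n.castSucc.succ i) / dt - (∑ i, U n.succ i * M n.succ.castSucc i) / dt
        - ν * ∑ i, lapl Nh h (U n.castSucc) i * M n.castSucc.succ i := by
    intro n
    simp only [opAstar_castSucc_succ, Finset.sum_div, Finset.mul_sum, ← Finset.sum_sub_distrib]
    refine Finset.sum_congr rfl fun i _ => ?_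
    rw [Fin.succ_castSucc]; ring
  have hLl : ∑ i, opAstar (N + 1) Nh dt ν h U (Fin.last N).succ i * M (Fin.last N).succ i =
      (∑ i, U (Fin.last N) i * M (Fin.last N).succ i) / dt
        - ν * ∑ i, lapl Nh h (U (Fin.last N)) i * M (Fin.last N).succ i := by
    simp only [opAstar_last, Finset.sum_div, Finset.mul_sum, ← Finset.sum_sub_distrib]
    refine Finset.sum_congr rfl fun i _ => ?_
    ring
  rw [Fin.sum_univ_succ, Fin.sum_univ_castSucc, hL0, hLl]
  simp only [hLs, hR, Finset.sum_sub_distrib]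
  rw [Fin.sum_univ_castSucc (fun n : Fin (N + 1) => (∑ i, U n i * M n.succ i) / dt),
    Fin.sum_univ_succ (fun n : Fin (N + 1) => (∑ i, U n i * M n.castSucc i) / dt),
    Fin.sum_univ_castSucc (fun n : Fin (N + 1) => ν * ∑ i, lapl Nh h (U n) i * M n.succ i)]
  simp only [Fin.castSucc_zero]
  ring

/-- The pairing `⟨Σ*(U, φ), (M, W)⟩` is the Lagrangian term `⟨U, A M + B W⟩ + ⟨φ, M⁰⟩`. -/
lemma pairing_eq {NT Nh : ℕ} (hNT : 0 < NT) [NeZero Nh] (dt ν h : ℝ) (U : Fin NT → ZMod Nh → ℝ)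
    (φ : ZMod Nh → ℝ) (p : PSpace NT Nh) :
    inerM NT Nh (fun n i => opAstar NT Nh dt ν h U n i + E0 NT Nh φ n i) p.1
        + inerW NT Nh (opBstar NT Nh h U) p.2 =
      ∑ n, ∑ i, U n i * (opA NT Nh dt ν h p.1 n i + opB NT Nh h p.2 n i)
        + ∑ i, φ i * p.1 0 i := by
  have h1 : inerM NT Nh (fun n i => opAstar NT Nh dt ν h U n i + E0 NT Nh φ n i) p.1 =
      inerM NT Nh (opAstar NT Nh dt ν h U) p.1 + ∑ i, φ i * p.1 0 i := by
    simp only [inerM, add_mul, Finset.sum_add_distrib]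
    congr 1
    rw [Fin.sum_univ_succ]
    simp [E0, Fin.succ_ne_zero]
  rw [h1, opA_adjoint hNT, opB_adjoint]
  simp only [mul_add, Finset.sum_add_distrib]
  ring

/-! ### Attainment in the primal problem -/

lemma feas_le_mass {NT Nh : ℕ} [NeZero Nh] {dt ν h : ℝ} (hdt : 0 < dt) {M0bar : ZMod Nh → ℝ}
    {p : PSpace NT Nh} (hp : Feas NT Nh dt ν h M0bar p) (n : Fin (NT + 1))
    (hnn : ∀ i, 0 ≤ p.1 n i) (i : ZMod Nh) : p.1 n i ≤ ∑ i, M0bar i := by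
  rw [← mass_conserved hdt hp n]
  exact Finset.single_le_sum (fun i _ => hnn i) (Finset.mem_univ i)

/-- The space of relaxed points `((M, W), τ)`, with `τ` a slack variable for the kinetic cost. -/
abbrev RSpace (NT Nh : ℕ) : Type := PSpace NT Nh × (Fin NT → ZMod Nh → ℝ)

/-- The primal problem has a minimiser once it has a feasible point of finite cost. The kinetic term
is not continuous at `m = 0`, so it is replaced by a slack variable `τ` with `|w|² ≤ 2mτ`; in the
variables `(M, W, τ)` the cost is continuous and, by conservation of mass, its sublevel sets are
compact. -/
lemma exists_primal {NT Nh : ℕ} [NeZero Nh] {dt ν h : ℝ} (hdt : 0 < dt)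
    {M0bar : ZMod Nh → ℝ} (hM0 : ∀ i, 0 ≤ M0bar i)
    {F P : ZMod Nh → ℝ → ℝ} (hF : ∀ i, Continuous (F i)) (hP : ∀ i, Continuous (P i))
    (k l : ZMod Nh → ℝ) (hk0 : ∀ i, 0 ≤ k i) (hl0 : ∀ i, 0 ≤ l i)
    (hk : ∀ i m, 0 ≤ m → -k i * m ≤ F i m) (hl : ∀ i m, 0 ≤ m → -l i * m ≤ P i m)
    (q : PSpace NT Nh) (hq : q ∈ Dom NT Nh) (hqf : Feas NT Nh dt ν h M0bar q) :
    ∃ p ∈ Dom NT Nh, Feas NT Nh dt ν h M0bar p ∧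
      ∀ p' ∈ Dom NT Nh, Feas NT Nh dt ν h M0bar p' →
        thetaR NT Nh dt F P p ≤ thetaR NT Nh dt F P p' := by
  set μ := ∑ i, M0bar i with hμ
  have hμ0 : 0 ≤ μ := Finset.sum_nonneg fun i _ => hM0 i
  set c := thetaR NT Nh dt F P q with hc
  set K : ℝ := (∑ _n : Fin NT, ∑ i : ZMod Nh, k i * μ) + 1 / dt * ∑ i, l i * μ with hK
  let J : RSpace NT Nh → ℝ := fun y => (∑ n, ∑ i, y.2 n i) + gcost NT Nh dt F P y.1.1
  have hJ : Continuous J := by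
    unfold J gcost
    fun_prop
  set S : Set (RSpace NT Nh) := {y | Feas NT Nh dt ν h M0bar y.1 ∧
    (∀ (n : Fin NT) (i : ZMod Nh), 0 ≤ y.1.1 n.succ i ∧ (y.1.2 n i).1 ≤ 0 ∧ 0 ≤ (y.1.2 n i).2 ∧
      0 ≤ y.2 n i ∧
      (y.1.2 n i).1 ^ 2 + (y.1.2 n i).2 ^ 2 ≤ 2 * y.1.1 n.succ i * y.2 n i) ∧ J y ≤ c} with hS
  have hclosed : IsClosed S := by
    have c1 : IsClosed {y : RSpace NT Nh | Feas NT Nh dt ν h M0bar y.1} := by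
      simp only [Feas, Set.ofPred_forall]
      refine isClosed_iInter fun j => isClosed_eq ?_ continuous_const
      exact (LinearMap.continuous_of_finiteDimensional (cons NT Nh dt ν h j)).comp continuous_fst
    have c2 : IsClosed {y : RSpace NT Nh | ∀ (n : Fin NT) (i : ZMod Nh),
        0 ≤ y.1.1 n.succ i ∧ (y.1.2 n i).1 ≤ 0 ∧ 0 ≤ (y.1.2 n i).2 ∧ 0 ≤ y.2 n i ∧
        (y.1.2 n i).1 ^ 2 + (y.1.2 n i).2 ^ 2 ≤ 2 * y.1.1 n.succ i * y.2 n i} := by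
      simp only [Set.ofPred_forall]
      refine isClosed_iInter fun n => isClosed_iInter fun i => ?_
      exact (isClosed_le (f := fun y : RSpace NT Nh => 0) (g := fun y => y.1.1 n.succ i)
          (by fun_prop) (by fun_prop)).inter
        ((isClosed_le (f := fun y : RSpace NT Nh => (y.1.2 n i).1) (g := fun y => 0)
          (by fun_prop) (by fun_prop)).inter
        ((isClosed_le (f := fun y : RSpace NT Nh => 0) (g := fun y => (y.1.2 n i).2)
          (by fun_prop) (by fun_prop)).inter
        ((isClosed_le (f := fun y : RSpace NT Nh => 0) (g := fun y => y.2 n i)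
          (by fun_prop) (by fun_prop)).inter
        (isClosed_le (f := fun y : RSpace NT Nh => (y.1.2 n i).1 ^ 2 + (y.1.2 n i).2 ^ 2)
          (g := fun y => 2 * y.1.1 n.succ i * y.2 n i) (by fun_prop) (by fun_prop)))))
    exact c1.inter (c2.inter (isClosed_le hJ continuous_const))
  have hbox : ∀ y ∈ S, (∀ n i, 0 ≤ y.1.1 n i ∧ y.1.1 n i ≤ μ) ∧
      ∀ n i, 0 ≤ y.2 n i ∧ y.2 n i ≤ c + K := by
    rintro y ⟨y1, y2, y3⟩
    have b0 : ∀ n i, 0 ≤ y.1.1 n i := by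
      intro n i
      induction n using Fin.cases with
      | zero => rw [(feas_iff.1 y1).2 i]; exact hM0 i
      | succ n => exact (y2 n i).1
    have b1 : ∀ n i, y.1.1 n i ≤ μ := fun n i => feas_le_mass hdt y1 n (b0 n) i
    refine ⟨fun n i => ⟨b0 n i, b1 n i⟩, fun n i => ⟨(y2 n i).2.2.2.1, ?_⟩⟩
    have b2 : y.2 n i ≤ ∑ n, ∑ i, y.2 n i :=
      (Finset.single_le_sum (f := fun i => y.2 n i) (fun i _ => (y2 n i).2.2.2.1)
        (Finset.mem_univ i)).trans
      (Finset.single_le_sum (f := fun n => ∑ i, y.2 n i)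
        (fun n _ => Finset.sum_nonneg fun i _ => (y2 n i).2.2.2.1) (Finset.mem_univ n))
    have b3 : -(∑ _n : Fin NT, ∑ i : ZMod Nh, k i * μ) ≤
        ∑ n : Fin NT, ∑ i : ZMod Nh, F i (y.1.1 n.succ i) := by
      simp only [← Finset.sum_neg_distrib]
      refine Finset.sum_le_sum fun n _ => Finset.sum_le_sum fun i _ => ?_
      have := hk i _ (b0 n.succ i)
      have := mul_le_mul_of_nonneg_left (b1 n.succ i) (hk0 i)
      linarith
    have b4 : -(∑ i : ZMod Nh, l i * μ) ≤ ∑ i : ZMod Nh, P i (y.1.1 (Fin.last NT) i) := by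
      simp only [← Finset.sum_neg_distrib]
      refine Finset.sum_le_sum fun i _ => ?_
      have := hl i _ (b0 (Fin.last NT) i)
      have := mul_le_mul_of_nonneg_left (b1 (Fin.last NT) i) (hl0 i)
      linarith
    have b5 := mul_le_mul_of_nonneg_left b4 (show 0 ≤ 1 / dt by positivity)
    simp only [J, gcost] at y3
    rw [hK]
    linarith
  set R : ℝ := 2 * μ * (c + K) + 1 with hR
  have hcompact : IsCompact S := by
    refine IsCompact.of_isClosed_subset (isCompact_Icc
      (a := ((((fun _ _ => 0), (fun _ _ => (-R, 0))), (fun _ _ => 0)) : RSpace NT Nh))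
      (b := ((((fun _ _ => μ), (fun _ _ => (0, R))), (fun _ _ => c + K)) : RSpace NT Nh))) hclosed ?_
    intro y hy
    obtain ⟨h1, h2⟩ := hbox y hy
    have h3 : ∀ n i, -R ≤ (y.1.2 n i).1 ∧ (y.1.2 n i).2 ≤ R := by
      intro n i
      obtain ⟨-, h4, h5, h6, h7⟩ := hy.2.1 n i
      have h8 : y.1.1 n.succ i * y.2 n i ≤ μ * (c + K) :=
        mul_le_mul (h1 _ _).2 (h2 _ _).2 (h2 _ _).1 hμ0
      constructor <;> nlinarith [sq_nonneg ((y.1.2 n i).1 + 1), sq_nonneg ((y.1.2 n i).2 - 1)]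
    exact ⟨⟨⟨fun n i => (h1 n i).1, fun n i => ⟨(h3 n i).1, (hy.2.1 n i).2.2.1⟩⟩,
      fun n i => (h2 n i).1⟩, ⟨fun n i => (h1 n i).2,
      fun n i => ⟨(hy.2.1 n i).2.1, (h3 n i).2⟩⟩, fun n i => (h2 n i).2⟩
  -- A point of the domain lifts to the relaxed problem with `τ` equal to its kinetic cost.
  have hlift : ∀ p ∈ Dom NT Nh, Feas NT Nh dt ν h M0bar p → thetaR NT Nh dt F P p ≤ c →
      ((p, fun n i => kin (p.1 n.succ i) (p.2 n i)) : RSpace NT Nh) ∈ S := by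
    intro p hp hpf hpc
    refine ⟨hpf, fun n i => ?_, hpc⟩
    have hnn := kin_nonneg (hp n i).nonneg (p.2 n i)
    rcases hp n i with ⟨h1, h2, h3⟩ | ⟨h1, h2⟩
    · refine ⟨h1.le, h2, h3, hnn, ?_⟩
      simp only [kin]
      apply le_of_eq; field_simp
    · simp [h1, h2, kin]
  obtain ⟨y, hyS, hymin⟩ := hcompact.exists_isMinOn ⟨_, hlift q hq hqf le_rfl⟩ hJ.continuousOn
  have hle : thetaR NT Nh dt F P y.1 ≤ J y := by
    simp only [thetaR, J]
    gcongr with n _ i _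
    obtain ⟨h1, -, -, h2, h3⟩ := hyS.2.1 n i
    exact div_le_of_le_mul₀ (by positivity) h2 (by linarith)
  refine ⟨y.1, fun n i => ?_, hyS.1, fun p' hp' hpf' => ?_⟩
  · obtain ⟨h1, h2, h3, h4, h5⟩ := hyS.2.1 n i
    rcases h1.eq_or_lt with h0 | h0
    · right
      rw [← h0] at h5
      refine ⟨h0.symm, Prod.ext ?_ ?_⟩
      · simp only [Prod.fst_zero]; nlinarith [sq_nonneg (y.1.2 n i).2]
      · simp only [Prod.snd_zero]; nlinarith [sq_nonneg (y.1.2 n i).1]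
    · exact Or.inl ⟨h0, h2, h3⟩
  · rcases le_total (thetaR NT Nh dt F P p') c with h | h
    · exact hle.trans (hymin (hlift p' hp' hpf' h))
    · exact hle.trans (hyS.2.2.trans h)

/-! ### A Slater point -/

/-- On the cycle, a function of zero sum is a discrete derivative. -/
lemma exists_primitive {Nh : ℕ} [NeZero Nh] (r : ZMod Nh → ℝ) (hr : ∑ i, r i = 0) :
    ∃ s : ZMod Nh → ℝ, ∀ i, s (i + 1) - s i = r i := by
  refine ⟨fun i => ∑ j ∈ Finset.range i.val, r (j : ZMod Nh), fun i => ?_⟩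
  have hi := ZMod.val_lt i
  have hcast : ((i.val : ℕ) : ZMod Nh) = i := ZMod.natCast_zmod_val i
  have htot : ∑ j ∈ Finset.range Nh, r (j : ZMod Nh) = 0 := by
    rw [← hr]
    refine Finset.sum_bij' (fun j _ => (j : ZMod Nh)) (fun i _ => i.val) (by simp)
      (fun i _ => Finset.mem_range.2 (ZMod.val_lt i)) (fun j hj => ?_) (fun i _ => by simp)
      (fun _ _ => rfl)
    exact ZMod.val_cast_of_lt (Finset.mem_range.1 hj)
  have hval : (i + 1).val = (i.val + 1) % Nh := by
    conv_lhs => rw [← hcast]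
    rw [← Nat.cast_succ, ZMod.val_natCast]
  simp only [hval]
  rcases Nat.lt_or_ge (i.val + 1) Nh with h | h
  · rw [Nat.mod_eq_of_lt h, Finset.sum_range_succ, hcast]; ring
  · have h' : i.val + 1 = Nh := by omega
    rw [show Finset.range Nh = Finset.range (i.val + 1) by rw [h'], Finset.sum_range_succ,
      hcast] at htot
    rw [show (i.val + 1) % Nh = 0 by rw [h', Nat.mod_self]]
    simp only [Finset.range_zero, Finset.sum_empty]
    linarith

/-- For positive mass there is a feasible point in the interior of the domain: transport the mass
within one time step to the uniform density, and add a divergence-free circulation to make the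
fluxes point strictly into `K`. -/
lemma exists_slater {NT Nh : ℕ} [NeZero Nh] {dt ν h : ℝ} (hh : 0 < h)
    {M0bar : ZMod Nh → ℝ} (hpos : 0 < ∑ i, M0bar i) :
    ∃ q ∈ interior (Dom NT Nh), Feas NT Nh dt ν h M0bar q := by
  have hNh : (0:ℝ) < Nh := Nat.cast_pos.2 (Nat.pos_of_ne_zero (NeZero.ne Nh))
  set a : ℝ := (∑ i, M0bar i) / Nh with ha
  have ha0 : 0 < a := div_pos hpos hNh
  obtain ⟨s, hs⟩ := exists_primitive (fun i => h * (-(a - M0bar i) / dt)) (by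
    rw [← Finset.mul_sum, ← Finset.sum_div, Finset.sum_neg_distrib, Finset.sum_sub_distrib]
    simp only [Finset.sum_const, Finset.card_univ, ZMod.card, nsmul_eq_mul]
    rw [ha, mul_div_cancel₀ _ hNh.ne']
    simp)
  set c : ℝ := 1 + ∑ i, |s i| with hc
  have hcs : ∀ i, 0 < c + s i := by
    intro i
    have h1 := Finset.single_le_sum (f := fun i => |s i|) (fun i _ => abs_nonneg _)
      (Finset.mem_univ i)
    have h2 := neg_abs_le (s i)
    linarith
  refine ⟨(fun n i => if (n : ℕ) = 0 then M0bar i else a,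
    fun n i => if (n : ℕ) = 0 then (-1, c + s i) else (-1, 1)), ?_, feas_iff.2 ⟨?_, ?_⟩⟩
  · rw [mem_interior]
    refine ⟨{p | ∀ (n : Fin NT) (i : ZMod Nh),
      0 < p.1 n.succ i ∧ (p.2 n i).1 < 0 ∧ 0 < (p.2 n i).2}, ?_, ?_, ?_⟩
    · intro p hp n i
      exact Or.inl ⟨(hp n i).1, (hp n i).2.1.le, (hp n i).2.2.le⟩
    · simp only [Set.ofPred_forall]
      refine isOpen_iInter_of_finite fun n => isOpen_iInter_of_finite fun i => ?_
      exact (isOpen_lt (f := fun p : PSpace NT Nh => 0) (g := fun p => p.1 n.succ i)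
          (by fun_prop) (by fun_prop)).inter
        ((isOpen_lt (f := fun p : PSpace NT Nh => (p.2 n i).1) (g := fun p => 0)
          (by fun_prop) (by fun_prop)).inter
        (isOpen_lt (f := fun p : PSpace NT Nh => 0) (g := fun p => (p.2 n i).2)
          (by fun_prop) (by fun_prop)))
    · intro n i
      simp only [Fin.val_succ, Nat.add_eq_zero_iff, one_ne_zero, and_false, if_false]
      refine ⟨ha0, ?_, ?_⟩ <;> split_ifs <;> simp [hcs]
  · intro n i
    simp only [opA, opB, lapl, Fin.val_succ, Fin.val_castSucc, Nat.add_eq_zero_iff, one_ne_zero,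
      and_false, if_false]
    split_ifs with hn
    · have := hs i
      simp only
      rw [show c + s (i + 1) - (c + s i) = h * (-(a - M0bar i) / dt) by rw [← this]; ring,
        mul_div_cancel_left₀ _ hh.ne']
      ring
    · ring
  · intro i
    simp

/-! ### Dual certificates -/

/-- The Lagrange multipliers `(U, φ)` for a positive total mass. -/
lemma certificate_pos {NT Nh : ℕ} [NeZero Nh] {dt ν h : ℝ} (hdt : 0 < dt) (hh : 0 < h)
    {M0bar : ZMod Nh → ℝ} (hpos : 0 < ∑ i, M0bar i) {F P : ZMod Nh → ℝ → ℝ}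
    (hF : ∀ i, ConvexOn ℝ Set.univ (F i)) (hP : ∀ i, ConvexOn ℝ Set.univ (P i))
    (v : ℝ) (hv : ∀ p ∈ Dom NT Nh, Feas NT Nh dt ν h M0bar p → v ≤ thetaR NT Nh dt F P p) :
    ∃ (U : Fin NT → ZMod Nh → ℝ) (φ : ZMod Nh → ℝ), ∀ p ∈ Dom NT Nh,
      ∑ n, ∑ i, U n i * (opA NT Nh dt ν h p.1 n i + opB NT Nh h p.2 n i) + ∑ i, φ i * p.1 0 i
        - thetaR NT Nh dt F P p ≤ ∑ i, M0bar i * φ i - v := by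
  obtain ⟨q, hq, hqf⟩ := exists_slater (NT := NT) (dt := dt) (ν := ν) hh hpos
  obtain ⟨c, hc⟩ := slater_multiplier (cons NT Nh dt ν h) (rhs NT Nh M0bar) (Dom NT Nh)
    (thetaR NT Nh dt F P) (thetaR_convexOn hdt hF hP) q hq hqf v hv
  refine ⟨fun n i => c (Sum.inl (n, i)), fun i => c (Sum.inr i), fun p hp => ?_⟩
  have := hc p hp
  simp only [Fintype.sum_sum_type, Fintype.sum_prod_type, rhs, Sum.elim_inl, Sum.elim_inr, mul_zero,
    Finset.sum_const_zero, zero_add] at this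
  simp only [mul_comm (M0bar _)]
  exact this

/-- For zero mass Slater's condition fails, but `(0, 0)` is optimal, certified by multipliers that
are affine in time and constant in space, with slope dominating the linear lower bounds on the
costs. -/
lemma certificate_zero {NT Nh : ℕ} (hNT : 0 < NT) [NeZero Nh] {dt ν h : ℝ} (hdt : 0 < dt)
    {F P : ZMod Nh → ℝ → ℝ}
    (k l : ZMod Nh → ℝ) (hk0 : ∀ i, 0 ≤ k i) (hl0 : ∀ i, 0 ≤ l i)
    (hk : ∀ i m, 0 ≤ m → -k i * m ≤ F i m) (hl : ∀ i m, 0 ≤ m → -l i * m ≤ P i m) :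
    ∃ (U : Fin NT → ZMod Nh → ℝ) (φ : ZMod Nh → ℝ), ∀ p ∈ Dom NT Nh,
      ∑ n, ∑ i, U n i * (opA NT Nh dt ν h p.1 n i + opB NT Nh h p.2 n i) + ∑ i, φ i * p.1 0 i
        - thetaR NT Nh dt F P p ≤ 0 := by
  obtain ⟨N, rfl⟩ : ∃ N, NT = N + 1 := ⟨NT - 1, by omega⟩
  set κ : ℝ := ∑ i, (k i + 1 / dt * l i) with hκ
  have hκi : ∀ i, k i + 1 / dt * l i ≤ κ := fun i =>
    Finset.single_le_sum (f := fun i => k i + 1 / dt * l i)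
      (fun i _ => by have := hk0 i; have := hl0 i; positivity) (Finset.mem_univ i)
  have hdt' : 0 ≤ 1 / dt := by positivity
  set U : Fin (N + 1) → ZMod Nh → ℝ := fun n _ => -κ * dt * (N + 1 - n) with hU
  refine ⟨U, fun i => U 0 i / dt, fun p hp => ?_⟩
  rw [← pairing_eq hNT]
  have hlapl : ∀ n i, lapl Nh h (U n) i = 0 := by
    intro n i; simp only [lapl, hU]; ring
  have hW : inerW (N + 1) Nh (opBstar (N + 1) Nh h U) p.2 = 0 := by
    simp [inerW, opBstar, hU]
  have hA : ∀ (n : Fin (N + 1)) i, opAstar (N + 1) Nh dt ν h U n.succ i = -κ := by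
    intro n i
    induction n using Fin.lastCases with
    | last =>
      rw [opAstar_last, hlapl]
      simp only [hU, Fin.val_last]
      field_simp
      ring
    | cast n =>
      rw [opAstar_castSucc_succ, hlapl]
      simp only [hU, Fin.val_castSucc, Fin.val_succ]
      push_cast
      field_simp
      ring
  have hM : inerM (N + 1) Nh (fun n i => opAstar (N + 1) Nh dt ν h U n i
      + E0 (N + 1) Nh (fun i => U 0 i / dt) n i) p.1 = ∑ n : Fin (N + 1), ∑ i, -κ * p.1 n.succ i := by
    unfold inerM
    rw [Fin.sum_univ_succ]
    simp only [opAstar_zero, hA, E0, if_true, Fin.succ_ne_zero, if_false, add_zero]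
    rw [Finset.sum_eq_zero, zero_add]
    intro i _
    ring
  have hnn : ∀ (n : Fin (N + 1)) i, 0 ≤ p.1 n.succ i := fun n i => (hp n i).nonneg
  have hkin : 0 ≤ ∑ n : Fin (N + 1), ∑ i, kin (p.1 n.succ i) (p.2 n i) :=
    Finset.sum_nonneg fun n _ => Finset.sum_nonneg fun i _ => kin_nonneg (hnn n i) _
  have hFs : ∑ n : Fin (N + 1), ∑ i, -k i * p.1 n.succ i ≤
      ∑ n : Fin (N + 1), ∑ i, F i (p.1 n.succ i) :=
    Finset.sum_le_sum fun n _ => Finset.sum_le_sum fun i _ => hk i _ (hnn n i)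
  have hPs : ∑ i, -l i * p.1 (Fin.last (N + 1)) i ≤ ∑ i, P i (p.1 (Fin.last (N + 1)) i) :=
    Finset.sum_le_sum fun i _ => hl i _ (hnn (Fin.last N) i)
  have hPs' := mul_le_mul_of_nonneg_left hPs hdt'
  have hPall : ∑ n : Fin (N + 1), ∑ i, -(1 / dt * l i) * p.1 n.succ i ≤
      1 / dt * ∑ i, -l i * p.1 (Fin.last (N + 1)) i := by
    rw [Fin.sum_univ_castSucc, Finset.mul_sum]
    have : ∑ n : Fin N, ∑ i, -(1 / dt * l i) * p.1 n.castSucc.succ i ≤ 0 :=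
      Finset.sum_nonpos fun n _ => Finset.sum_nonpos fun i _ => by
        have := hnn n.castSucc i
        have := hl0 i
        rw [neg_mul, neg_nonpos]
        positivity
    have h2 : ∑ i, -(1 / dt * l i) * p.1 (Fin.last N).succ i =
        ∑ i, 1 / dt * (-l i * p.1 (Fin.last (N + 1)) i) :=
      Finset.sum_congr rfl fun i _ => by rw [Fin.succ_last]; ring
    linarith
  have hκs : ∑ n : Fin (N + 1), ∑ i, -κ * p.1 n.succ i ≤
      ∑ n : Fin (N + 1), ∑ i, -k i * p.1 n.succ i
        + ∑ n : Fin (N + 1), ∑ i, -(1 / dt * l i) * p.1 n.succ i := by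
    simp only [← Finset.sum_add_distrib]
    refine Finset.sum_le_sum fun n _ => Finset.sum_le_sum fun i _ => ?_
    have := mul_le_mul_of_nonneg_right (hκi i) (hnn n i)
    linarith
  rw [hW, hM]
  simp only [thetaR, gcost]
  linarith

/-- Real-valued strong duality: a primal minimiser together with optimal multipliers. -/
lemma exists_saddle {NT Nh : ℕ} (hNT : 0 < NT) [NeZero Nh] {dt ν h : ℝ} (hdt : 0 < dt) (hh : 0 < h)
    {M0bar : ZMod Nh → ℝ} (hM0 : ∀ i, 0 ≤ M0bar i) {f0 phi : ZMod Nh → ℝ → ℝ}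
    (hf0c : ∀ i, Continuous (f0 i)) (hf0m : ∀ i, Monotone (f0 i))
    (hphic : ∀ i, Continuous (phi i)) (hphim : ∀ i, Monotone (phi i)) :
    ∃ p ∈ Dom NT Nh, Feas NT Nh dt ν h M0bar p ∧
      ∃ (U : Fin NT → ZMod Nh → ℝ) (φ : ZMod Nh → ℝ), ∀ p' ∈ Dom NT Nh,
        ∑ n, ∑ i, U n i * (opA NT Nh dt ν h p'.1 n i + opB NT Nh h p'.2 n i)
          + ∑ i, φ i * p'.1 0 i - thetaR NT Nh dt (prim f0) (prim phi) p' ≤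
        ∑ i, M0bar i * φ i - thetaR NT Nh dt (prim f0) (prim phi) p := by
  rcases (Finset.sum_nonneg fun i (_ : i ∈ Finset.univ) => hM0 i).eq_or_lt with h0 | hpos
  · have hz : ∀ i, M0bar i = 0 := fun i =>
      (Finset.sum_eq_zero_iff_of_nonneg fun i _ => hM0 i).1 h0.symm i (Finset.mem_univ i)
    refine ⟨0, fun n i => Or.inr ⟨rfl, rfl⟩, feas_iff.2 ⟨fun n i => ?_, fun i => ?_⟩, ?_⟩
    · simp [opA, opB, lapl]
    · simp [hz]
    obtain ⟨U, φ, hUφ⟩ := certificate_zero (ν := ν) (h := h) hNT hdt (fun i => |f0 i 0|)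
      (fun i => |phi i 0|) (fun i => abs_nonneg _) (fun i => abs_nonneg _)
      (fun i m hm => prim_lower hf0c hf0m i hm) (fun i m hm => prim_lower hphic hphim i hm)
    refine ⟨U, φ, fun p' hp' => ?_⟩
    have e : thetaR NT Nh dt (prim f0) (prim phi) 0 = 0 := by
      simp [thetaR, gcost, kin, prim]
    have := hUφ p' hp'
    simpa only [hz, zero_mul, Finset.sum_const_zero, e, sub_zero] using this
  · obtain ⟨q, hq, hqf⟩ := exists_slater (NT := NT) (dt := dt) (ν := ν) hh hpos
    obtain ⟨p, hp, hpf, hmin⟩ := exists_primal hdt hM0 (prim_continuous hf0c)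
      (prim_continuous hphic) (fun i => |f0 i 0|)
      (fun i => |phi i 0|) (fun i => abs_nonneg _) (fun i => abs_nonneg _)
      (fun i m hm => prim_lower hf0c hf0m i hm) (fun i m hm => prim_lower hphic hphim i hm)
      q (interior_subset hq) hqf
    exact ⟨p, hp, hpf, certificate_pos hdt hh hpos (prim_convexOn hf0c hf0m)
      (prim_convexOn hphic hphim) _ hmin⟩

/-! ### Passage to the extended-real duality statement -/

lemma pairing_feas {NT Nh : ℕ} [NeZero Nh] {dt ν h : ℝ} {M0bar : ZMod Nh → ℝ} {p : PSpace NT Nh}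
    (hp : Feas NT Nh dt ν h M0bar p) (U : Fin NT → ZMod Nh → ℝ) (φ : ZMod Nh → ℝ) :
    ∑ n, ∑ i, U n i * (opA NT Nh dt ν h p.1 n i + opB NT Nh h p.2 n i) + ∑ i, φ i * p.1 0 i =
      ∑ i, M0bar i * φ i := by
  obtain ⟨h1, h2⟩ := feas_iff.1 hp
  simp only [h1, h2, mul_zero, Finset.sum_const_zero, zero_add, mul_comm]

/-- Weak duality. -/
lemma weak_duality {NT Nh : ℕ} (hNT : 0 < NT) [NeZero Nh] {dt ν h : ℝ} {M0bar : ZMod Nh → ℝ}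
    {f0 phi : ZMod Nh → ℝ → ℝ} {p : PSpace NT Nh} (hp : p ∈ Dom NT Nh)
    (hpf : Feas NT Nh dt ν h M0bar p) (U : Fin NT → ZMod Nh → ℝ) (φ : ZMod Nh → ℝ) :
    ((-thetaR NT Nh dt (prim f0) (prim phi) p : ℝ) : EReal) ≤
      DualObj NT Nh dt ν h f0 phi M0bar U φ := by
  unfold DualObj ThetaStar
  have h1 := le_iSup (fun p : PSpace NT Nh =>
    ((inerM NT Nh (fun n i => opAstar NT Nh dt ν h U n i + E0 NT Nh φ n i) p.1
      + inerW NT Nh (opBstar NT Nh h U) p.2 : ℝ) : EReal) - Theta NT Nh dt f0 phi p.1 p.2) p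
  rw [pairing_eq hNT, pairing_feas hpf, Theta_of_dom hNT dt f0 phi p hp, ← EReal.coe_sub] at h1
  refine le_trans (le_of_eq ?_) (EReal.sub_le_sub h1 le_rfl)
  rw [← EReal.coe_sub]
  congr 1
  ring

/-- Discrete strong duality: the primal minimum over feasible `(M,W)` equals minus
the dual minimum over `(U,φ)`, and both minima are attained. -/
theorem discrete_strong_duality (NT Nh : ℕ) (hNT : 0 < NT) [NeZero Nh]
    (T ν : ℝ) (hT : 0 < T) (hν : 0 ≤ ν)
    (f0 phi : ZMod Nh → ℝ → ℝ)
    (hf0c : ∀ i, Continuous (f0 i)) (hf0m : ∀ i, Monotone (f0 i))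
    (hphic : ∀ i, Continuous (phi i)) (hphim : ∀ i, Monotone (phi i))
    (M0bar : ZMod Nh → ℝ) (hM0 : ∀ i, 0 ≤ M0bar i) :
    ∃ (M : Fin (NT + 1) → ZMod Nh → ℝ) (W : Fin NT → ZMod Nh → ℝ × ℝ)
      (U : Fin NT → ZMod Nh → ℝ) (φ : ZMod Nh → ℝ),
      ((∀ (n : Fin NT) (i : ZMod Nh),
          opA NT Nh (T / NT) ν (1 / (Nh : ℝ)) M n i
            + opB NT Nh (1 / (Nh : ℝ)) W n i = 0) ∧
        (∀ i : ZMod Nh, M 0 i = M0bar i)) ∧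
      (∀ (M' : Fin (NT + 1) → ZMod Nh → ℝ) (W' : Fin NT → ZMod Nh → ℝ × ℝ),
        (∀ (n : Fin NT) (i : ZMod Nh),
          opA NT Nh (T / NT) ν (1 / (Nh : ℝ)) M' n i
            + opB NT Nh (1 / (Nh : ℝ)) W' n i = 0) →
        (∀ i : ZMod Nh, M' 0 i = M0bar i) →
        Theta NT Nh (T / NT) f0 phi M W ≤ Theta NT Nh (T / NT) f0 phi M' W') ∧
      (∀ (U' : Fin NT → ZMod Nh → ℝ) (φ' : ZMod Nh → ℝ),
        DualObj NT Nh (T / NT) ν (1 / (Nh : ℝ)) f0 phi M0bar U φ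
          ≤ DualObj NT Nh (T / NT) ν (1 / (Nh : ℝ)) f0 phi M0bar U' φ') ∧
      Theta NT Nh (T / NT) f0 phi M W
        = - DualObj NT Nh (T / NT) ν (1 / (Nh : ℝ)) f0 phi M0bar U φ := by
  have hdt : 0 < T / NT := div_pos hT (Nat.cast_pos.2 hNT)
  have hh : (0:ℝ) < 1 / Nh :=
    one_div_pos.2 (Nat.cast_pos.2 (Nat.pos_of_ne_zero (NeZero.ne Nh)))
  obtain ⟨p, hp, hpf, U, φ, hUφ⟩ :=
    exists_saddle (ν := ν) hNT hdt hh hM0 hf0c hf0m hphic hphim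
  have hge := fun U' φ' => weak_duality (f0 := f0) (phi := phi) hNT hp hpf U' φ'
  have hle : DualObj NT Nh (T / NT) ν (1 / (Nh : ℝ)) f0 phi M0bar U φ ≤
      ((-thetaR NT Nh (T / NT) (prim f0) (prim phi) p : ℝ) : EReal) := by
    have h1 : ThetaStar NT Nh (T / NT) f0 phi
        (fun n i => opAstar NT Nh (T / NT) ν (1 / (Nh : ℝ)) U n i + E0 NT Nh φ n i)
        (opBstar NT Nh (1 / (Nh : ℝ)) U) ≤
        ((∑ i, M0bar i * φ i - thetaR NT Nh (T / NT) (prim f0) (prim phi) p : ℝ) : EReal) := by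
      refine iSup_le fun p' => ?_
      by_cases hp' : p' ∈ Dom NT Nh
      · rw [pairing_eq hNT, Theta_of_dom hNT _ f0 phi p' hp', ← EReal.coe_sub, EReal.coe_le_coe_iff]
        exact hUφ p' hp'
      · rw [Theta_of_not_dom _ hdt f0 phi p' hp', EReal.sub_top]
        exact bot_le
    refine (EReal.sub_le_sub h1 le_rfl).trans (le_of_eq ?_)
    rw [← EReal.coe_sub]
    congr 1
    ring
  have heq := le_antisymm hle (hge U φ)
  refine ⟨p.1, p.2, U, φ, feas_iff.1 hpf, fun M' W' hc h0 => ?_, fun U' φ' => ?_, ?_⟩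
  · rw [Theta_of_dom hNT _ f0 phi p hp]
    by_cases hp' : ((M', W') : PSpace NT Nh) ∈ Dom NT Nh
    · rw [Theta_of_dom hNT _ f0 phi (M', W') hp', EReal.coe_le_coe_iff]
      have h1 := hUφ (M', W') hp'
      rw [pairing_feas (feas_iff.2 ⟨hc, h0⟩)] at h1
      linarith
    · rw [Theta_of_not_dom _ hdt f0 phi (M', W') hp']
      exact le_top
  · rw [heq]
    exact hge U' φ'
  · rw [heq, Theta_of_dom hNT _ f0 phi p hp, ← EReal.coe_neg, neg_neg]
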